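/- Let T : ℕ → ℚ⟦X⟧ be the sequence of formal power series defined by T 0 = 0 and T (k+1) = X·(1 − T k)⁻¹. Then for every natural number k, one has (1 − 2·T k)·F_{k+1} = F_{k+2} − X·F_k in ℚ⟦X⟧, where the Fibonacci polynomials are regarded as formal power series. -/

import Mathlib

open PowerSeries

/-- The Fibonacci polynomials: `F 0 = 0`, `F 1 = 1`, `F (k+2) = F (k+1) - X * F k`. -/
noncomputable def fibPoly : ℕ → Polynomial ℤ
  | 0 => 0
  | 1 => 1
  | (k + 2) => fibPoly (k + 1) - Polynomial.X * fibPoly k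

/-- The Fibonacci polynomials regarded as formal power series over `ℚ`. -/
noncomputable def fibPS (k : ℕ) : PowerSeries ℚ :=
  (((fibPoly k).map (Int.castRingHom ℚ) : Polynomial ℚ) : PowerSeries ℚ)

/-- The generating function of ordered trees of height at most `k`:
`T 0 = 0`, `T (k+1) = X * (1 - T k)⁻¹`. -/
noncomputable def treeGF : ℕ → PowerSeries ℚ
  | 0 => 0
  | (k + 1) => PowerSeries.X * (1 - treeGF k)⁻¹

theorem fibPS_rec_aux (k : ℕ) :
    fibPS (k + 2) = fibPS (k + 1) - PowerSeries.X * fibPS k := by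
  simp [fibPS, fibPoly]

theorem treeGF_const_aux (k : ℕ) : PowerSeries.constantCoeff (treeGF k) = 0 := by
  cases k <;> simp [treeGF]

theorem treeGF_mul_aux (k : ℕ) : treeGF k * fibPS (k + 1) = PowerSeries.X * fibPS k := by
  induction k with
  | zero => simp [treeGF, fibPS, fibPoly]
  | succ k ih =>
    have h : (1 - treeGF k)⁻¹ * (1 - treeGF k) = 1 :=
      PowerSeries.inv_mul_cancel _ (by simp [treeGF_const_aux])
    rw [fibPS_rec_aux k, ← ih, treeGF]
    linear_combination PowerSeries.X * fibPS (k + 1) * h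

theorem one_sub_two_treeGF_mul_fib (k : ℕ) :
    (1 - 2 * treeGF k) * fibPS (k + 1) = fibPS (k + 2) - PowerSeries.X * fibPS k := by
  rw [fibPS_rec_aux k]
  linear_combination -2 * treeGF_mul_aux k
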